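/- Let Γ be a flat visibility representation of a finite simple planar graph G. Then there exists a planar straight-line drawing Γ' of G with the same y-coordinates as Γ (the point of every vertex in Γ' has y-coordinate equal to the y-coordinate of that vertex's horizontal segment in Γ) and the same left-to-right order in each row as Γ. In particular, Γ' has the same height as Γ. -/

import Mathlib

open Set

/-- A point in the plane. -/
abbrev Pt : Type := ℝ × ℝ

/-- A point has integer coordinates. -/
def IsIntPt (p : Pt) : Prop := (∃ a : ℤ, p.1 = (a : ℝ)) ∧ (∃ b : ℤ, p.2 = (b : ℝ))

/-- The (closed) segments of a polygonal chain, as pairs of consecutive corners. -/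
def chainSegs (l : List Pt) : List (Pt × Pt) := l.zip l.tail

/-- The set of points covered by a polygonal chain. -/
def chainSet (l : List Pt) : Set Pt := ⋃ s ∈ chainSegs l, segment ℝ s.1 s.2

/-- A polygonal chain is simple (non-self-intersecting): it has at least two
corners, all corners are distinct, and two of its segments meet only if they are
consecutive, and then only in their shared corner. -/
def IsSimpleChain (l : List Pt) : Prop :=
  2 ≤ l.length ∧ l.Nodup ∧
    ∀ i j : ℕ, i < j → ∀ (hi : i < (chainSegs l).length) (hj : j < (chainSegs l).length),
      segment ℝ ((chainSegs l).get ⟨i, hi⟩).1 ((chainSegs l).get ⟨i, hi⟩).2 ∩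
        segment ℝ ((chainSegs l).get ⟨j, hj⟩).1 ((chainSegs l).get ⟨j, hj⟩).2 ⊆
        if j = i + 1 then {((chainSegs l).get ⟨j, hj⟩).1} else (∅ : Set Pt)

/-- Every interior corner of the chain is a genuine bend (a direction change). -/
def GenuineBends (l : List Pt) : Prop :=
  ∀ i : ℕ, ∀ h : i + 2 < l.length,
    ¬ Collinear ℝ ({l.get ⟨i, by omega⟩, l.get ⟨i + 1, by omega⟩, l.get ⟨i + 2, h⟩} : Set Pt)

/-- The chain is a y-monotone path (horizontal segments allowed). -/
def IsMonoChain (l : List Pt) : Prop :=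
  (l.map Prod.snd).Chain' (· ≤ ·) ∨ (l.map Prod.snd).Chain' (fun a b => b ≤ a)

/-- All segments of the chain are horizontal or vertical. -/
def IsOrthoChain (l : List Pt) : Prop :=
  ∀ s ∈ chainSegs l, s.1.1 = s.2.1 ∨ s.1.2 = s.2.2

/-- A poly-line drawing of a graph `G`: every vertex is a point, and every edge
`uv` is the polygonal chain through the list `bends u v` of bend points
(listed in order from `u` to `v`). -/
structure PolylineDrawing {V : Type*} (G : SimpleGraph V) where
  pos : V → Pt
  bends : V → V → List Pt
  bends_symm : ∀ u v, bends v u = (bends u v).reverse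

namespace PolylineDrawing

variable {V : Type*} {G : SimpleGraph V}

/-- The corner list of the curve of edge `uv`. -/
def chain (D : PolylineDrawing G) (u v : V) : List Pt :=
  D.pos u :: (D.bends u v ++ [D.pos v])

/-- The set of points of the curve of edge `uv`. -/
def curve (D : PolylineDrawing G) (u v : V) : Set Pt := chainSet (D.chain u v)

/-- The defining elements of the drawing: vertex points and bends. -/
def points (D : PolylineDrawing G) : Set Pt :=
  Set.range D.pos ∪ ⋃ (u) (v) (_ : G.Adj u v), {p | p ∈ D.bends u v}

/-- The drawing is planar: vertex points are pairwise distinct, every edge curve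
is a simple chain whose interior corners are genuine bends, an edge curve contains
no vertex point other than its endpoints, and two distinct edge curves intersect
only in points of common endpoints. -/
def IsPlanar (D : PolylineDrawing G) : Prop :=
  Function.Injective D.pos ∧
  (∀ u v, G.Adj u v → IsSimpleChain (D.chain u v) ∧ GenuineBends (D.chain u v)) ∧
  (∀ u v w, G.Adj u v → w ≠ u → w ≠ v → D.pos w ∉ D.curve u v) ∧
  (∀ u v x y, G.Adj u v → G.Adj x y → s(u, v) ≠ s(x, y) →
    D.curve u v ∩ D.curve x y ⊆ D.pos '' (({u, v} : Set V) ∩ ({x, y} : Set V)))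

/-- All defining elements have integer coordinates. -/
def IntCoords (D : PolylineDrawing G) : Prop := ∀ p ∈ D.points, IsIntPt p

/-- A straight-line drawing: no edge has bends. -/
def IsStraightLine (D : PolylineDrawing G) : Prop := ∀ u v : V, D.bends u v = []

/-- Every edge curve is a y-monotone path. -/
def IsYMonotone (D : PolylineDrawing G) : Prop :=
  ∀ u v, G.Adj u v → IsMonoChain (D.chain u v)

/-- The drawing fits (after translation) in the rows `1, …, h`. -/
def InHeight (D : PolylineDrawing G) (h : ℕ) : Prop :=
  ∃ y0 : ℤ, ∀ p ∈ D.points, (y0 : ℝ) ≤ p.2 ∧ p.2 ≤ (y0 : ℝ) + (h : ℝ) - 1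

/-- The drawing fits (after translation) in the columns `1, …, w`. -/
def InWidth (D : PolylineDrawing G) (w : ℕ) : Prop :=
  ∃ x0 : ℤ, ∀ p ∈ D.points, (x0 : ℝ) ≤ p.1 ∧ p.1 ≤ (x0 : ℝ) + (w : ℝ) - 1

end PolylineDrawing

/-- An axis-parallel box (possibly degenerated to a segment or a point). -/
structure Box where
  x1 : ℝ
  x2 : ℝ
  y1 : ℝ
  y2 : ℝ
  hx : x1 ≤ x2
  hy : y1 ≤ y2

/-- The set of points of a box. -/
def Box.pts (b : Box) : Set Pt := Set.Icc b.x1 b.x2 ×ˢ Set.Icc b.y1 b.y2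

/-- An orthogonal drawing of a graph `G`: every vertex is an axis-aligned box, and
every edge `uv` is an axis-parallel polygonal chain `chain u v` (its first corner is
the attachment point on the box of `u`, its last corner the attachment point on the
box of `v`). -/
structure OrthDrawing {V : Type*} (G : SimpleGraph V) where
  box : V → Box
  chain : V → V → List Pt
  chain_symm : ∀ u v, chain v u = (chain u v).reverse

namespace OrthDrawing

variable {V : Type*} {G : SimpleGraph V}

/-- The set of points of the curve of edge `uv`. -/
def curve (D : OrthDrawing G) (u v : V) : Set Pt := chainSet (D.chain u v)

/-- The defining elements of the drawing: corners of vertex boxes, and corners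
(attachment points and bends) of edge chains. -/
def points (D : OrthDrawing G) : Set Pt :=
  (⋃ v, ({((D.box v).x1, (D.box v).y1), ((D.box v).x1, (D.box v).y2),
          ((D.box v).x2, (D.box v).y1), ((D.box v).x2, (D.box v).y2)} : Set Pt)) ∪
    ⋃ (u) (v) (_ : G.Adj u v), {p | p ∈ D.chain u v}

/-- All points covered by the drawing (boxes and edge curves). -/
def region (D : OrthDrawing G) : Set Pt :=
  (⋃ v, (D.box v).pts) ∪ ⋃ (u) (v) (_ : G.Adj u v), D.curve u v

/-- The drawing is planar: vertex boxes are pairwise disjoint; every edge curve is a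
simple axis-parallel chain, with genuine bends, joining the boxes of its endpoints;
an edge curve meets a vertex box only in its attachment points; and two distinct
edge curves intersect only in common endpoints. -/
def IsPlanar (D : OrthDrawing G) : Prop :=
  (∀ u v : V, u ≠ v → Disjoint (D.box u).pts (D.box v).pts) ∧
  (∀ u v, G.Adj u v → IsSimpleChain (D.chain u v) ∧ IsOrthoChain (D.chain u v) ∧
      GenuineBends (D.chain u v)) ∧
  (∀ u v, G.Adj u v → ∃ p q l, D.chain u v = p :: (l ++ [q]) ∧
      p ∈ (D.box u).pts ∧ q ∈ (D.box v).pts) ∧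
  (∀ u v w, G.Adj u v → D.curve u v ∩ (D.box w).pts ⊆
      {p | (w = u ∧ (D.chain u v).head? = some p) ∨
           (w = v ∧ (D.chain u v).getLast? = some p)}) ∧
  (∀ u v x y, G.Adj u v → G.Adj x y → s(u, v) ≠ s(x, y) →
      D.curve u v ∩ D.curve x y ⊆
        {p | ((D.chain u v).head? = some p ∨ (D.chain u v).getLast? = some p) ∧
             ((D.chain x y).head? = some p ∨ (D.chain x y).getLast? = some p)})

/-- A flat drawing: every vertex box is degenerated to a horizontal segment. -/
def IsFlat (D : OrthDrawing G) : Prop := ∀ v, (D.box v).y1 = (D.box v).y2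

/-- A visibility representation: an orthogonal drawing without bends, i.e. every
edge is a single horizontal or vertical segment. -/
def IsVR (D : OrthDrawing G) : Prop := ∀ u v, G.Adj u v → (D.chain u v).length = 2

/-- Every edge curve is a y-monotone path. -/
def IsYMonotone (D : OrthDrawing G) : Prop := ∀ u v, G.Adj u v → IsMonoChain (D.chain u v)

/-- All defining elements have integer coordinates. -/
def IntCoords (D : OrthDrawing G) : Prop := ∀ p ∈ D.points, IsIntPt p

/-- The drawing fits (after translation) in the rows `1, …, h`. -/
def InHeight (D : OrthDrawing G) (h : ℕ) : Prop :=
  ∃ y0 : ℤ, ∀ p ∈ D.points, (y0 : ℝ) ≤ p.2 ∧ p.2 ≤ (y0 : ℝ) + (h : ℝ) - 1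

/-- The drawing fits (after translation) in the columns `1, …, w`. -/
def InWidth (D : OrthDrawing G) (w : ℕ) : Prop :=
  ∃ x0 : ℤ, ∀ p ∈ D.points, (x0 : ℝ) ≤ p.1 ∧ p.1 ≤ (x0 : ℝ) + (w : ℝ) - 1

end OrthDrawing

/-!
Keep the rows and look for abscissas `X : V → ℤ` such that, in every row through a bar, the bars and
the vertical edges met by the row keep their order from left to right when the edges are drawn
straight. Between two such rows abscissas vary affinely along the edges, so the straight-line
drawing is then planar.

These requirements form a finite homogeneous system of strict linear inequalities. By Gordan's
alternative, if it has no solution then there are nonnegative forces, not all zero, that push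
neighbours in a row apart and are in equilibrium once each force on an edge is distributed to the
ends of the edge according to the law of the lever. Let `Φ r k` be the total bending moment about
row `r` of what lies to the left of the strip between the columns `k` and `k + 1`. As a function of
`k` it jumps only across vertical edges; as a function of `r` it is convex at every strip that
misses the bars of the row. The maximum principle gives `Φ ≤ 0`. If `Φ` did not vanish, it would be
nonzero just above the bottom of a wedge between two edges that leave the same bar `a` upwards,
while vanishing on the bars where these edges end. The graph being simple, these bars are distinct,
and following the zeros of `Φ` down from the lower one leads to a zero at the bottom of the wedge.
So `Φ = 0`, and then its second differences show that all the forces vanish. Finally, a real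
solution is scaled up and rounded down to an integral one.
-/

section Gordan

theorem exists_forall_pos_or_exists_mem_stdSimplex {ι E : Type*} [Fintype ι] [TopologicalSpace E]
    [AddCommGroup E] [Module ℝ E] [IsTopologicalAddGroup E] [ContinuousSMul ℝ E]
    [LocallyConvexSpace ℝ E] [T2Space E] (f : ι → E) :
    (∃ g : E →L[ℝ] ℝ, ∀ i, 0 < g (f i)) ∨ ∃ c ∈ stdSimplex ℝ ι, ∑ i, c i • f i = 0 := by
  classical
  let T : (ι → ℝ) →ₗ[ℝ] E := Fintype.linearCombination ℝ f
  have hT : Continuous T := T.continuous_of_finiteDimensional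
  by_cases h0 : (0 : E) ∈ T '' stdSimplex ℝ ι
  · exact Or.inr h0
  · obtain ⟨g, u, hu, hg⟩ := geometric_hahn_banach_point_closed
      ((convex_stdSimplex ℝ ι).linear_image T) ((isCompact_stdSimplex ℝ ι).image hT).isClosed h0
    refine Or.inl ⟨g, fun i => ?_⟩
    have hi := hg (T (Pi.single i 1)) (mem_image_of_mem T (single_mem_stdSimplex ℝ i))
    simp only [T, Fintype.linearCombination_apply_single, one_smul] at hi
    linarith [map_zero g]

/-- **Gordan's theorem of the alternative**. -/
theorem exists_forall_pos_or_exists_sum_smul_eq_zero {ι V : Type*} [Fintype ι] [Finite V]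
    (L : ι → (V → ℝ) →ₗ[ℝ] ℝ) :
    (∃ x, ∀ i, 0 < L i x) ∨ ∃ c ∈ stdSimplex ℝ ι, ∑ i, c i • L i = 0 := by
  classical
  have := Fintype.ofFinite V
  rcases exists_forall_pos_or_exists_mem_stdSimplex fun i w => L i (Pi.single w 1) with
    ⟨g, hg⟩ | ⟨c, hc, h⟩
  · have eval (M : (V → ℝ) →ₗ[ℝ] ℝ) (y : V → ℝ) : M y = ∑ w, y w * M (Pi.single w 1) := by
      conv_lhs => rw [← Finset.univ_sum_single y, map_sum]
      refine Finset.sum_congr rfl fun w _ => ?_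
      rw [← smul_eq_mul, ← map_smul, ← Pi.single_smul, smul_eq_mul, mul_one]
    refine Or.inl ⟨fun w => g (Pi.single w 1), fun i => (hg i).trans_eq ?_⟩
    rw [← ContinuousLinearMap.coe_coe, eval, eval (L i)]
    exact Finset.sum_congr rfl fun w _ => mul_comm _ _
  · refine Or.inr ⟨c, hc, LinearMap.pi_ext' fun w => LinearMap.ext_ring ?_⟩
    simpa using congrFun h w

end Gordan

/-! ### Bar layouts and the maximum principle for moments -/

/-- The combinatorial data of a flat visibility representation on the integer grid: the vertex `v`
is the bar `[left v, right v]` in row `row v`, and `Vert u v` says that an edge runs vertically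
upwards from the bar of `u` to the bar of `v`, in column `col u v`. The last three fields express
planarity. -/
structure BarLayout (V : Type*) where
  row : V → ℤ
  left : V → ℤ
  right : V → ℤ
  Vert : V → V → Prop
  col : V → V → ℤ
  left_le_right : ∀ v, left v ≤ right v
  row_lt_row : ∀ {u v}, Vert u v → row u < row v
  col_mem_bot : ∀ {u v}, Vert u v → col u v ∈ Icc (left u) (right u)
  col_mem_top : ∀ {u v}, Vert u v → col u v ∈ Icc (left v) (right v)
  bar_bar : ∀ {u v}, u ≠ v → row u = row v → right u < left v ∨ right v < left u
  vert_bar : ∀ {u v w}, Vert u v → row u < row w → row w < row v →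
    col u v < left w ∨ right w < col u v
  vert_vert : ∀ {u v u' v'}, Vert u v → Vert u' v' → col u v = col u' v' →
    row u < row v' → row u' < row v → u = u' ∧ v = v'

namespace BarLayout

variable {V : Type*} (C : BarLayout V)

/-- The strip between the columns `k` and `k + 1` misses all the bars in row `r`. -/
def Gap (r k : ℤ) : Prop := ∀ w, C.row w = r → ¬(C.left w ≤ k ∧ k < C.right w)

theorem gap_right (w : V) : C.Gap (C.row w) (C.right w) := by
  rintro u hu ⟨h₁, h₂⟩
  obtain rfl | hne := eq_or_ne u w
  · exact h₂.false
  · have := C.left_le_right w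
    rcases C.bar_bar hne hu with h | h <;> omega

theorem gap_left_sub_one (w : V) : C.Gap (C.row w) (C.left w - 1) := by
  rintro u hu ⟨h₁, h₂⟩
  obtain rfl | hne := eq_or_ne u w
  · omega
  · have := C.left_le_right w
    rcases C.bar_bar hne hu with h | h <;> omega

theorem gap_col {u v : V} (h : C.Vert u v) {r : ℤ} (hu : C.row u < r) (hv : r < C.row v) :
    C.Gap r (C.col u v) := by
  rintro w rfl ⟨h₁, h₂⟩
  rcases C.vert_bar h hu hv with h | h <;> omega

/-- The properties of the bending moment of a system of horizontal forces in equilibrium: `Φ r k`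
is the moment, about row `r`, of the forces acting to the left of the strip between the columns
`k` and `k + 1`. -/
structure IsMoment (Φ : ℤ → ℤ → ℝ) : Prop where
  exists_vert : ∀ {r k}, Φ r (k - 1) ≠ Φ r k →
    ∃ u v, C.Vert u v ∧ C.col u v = k ∧ C.row u < r ∧ r < C.row v
  convex : ∀ {r k}, C.Gap r k → 2 * Φ r k ≤ Φ (r + 1) k + Φ (r - 1) k
  finite_range : (range fun q : ℤ × ℤ => Φ q.1 q.2).Finite
  eq_zero_above : ∀ᶠ r in Filter.atTop, ∀ k, Φ r k = 0
  eq_zero_left : ∀ᶠ k in Filter.atBot, ∀ r, Φ r k = 0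

namespace IsMoment

variable {C} {Φ : ℤ → ℤ → ℝ}

theorem eq_on_bar (hΦ : C.IsMoment Φ) {w : V} {k : ℤ} (hl : C.left w - 1 ≤ k)
    (hr : k ≤ C.right w) : Φ (C.row w) k = Φ (C.row w) (C.right w) := by
  induction k, hr using Int.leInductionDown with
  | base => rfl
  | pred k hk ih =>
    rw [← ih (by omega)]
    by_contra hne
    obtain ⟨u, v, h, rfl, hu, hv⟩ := hΦ.exists_vert hne
    rcases C.vert_bar h hu hv with h' | h' <;> omega

theorem exists_gap_eq (hΦ : C.IsMoment Φ) (r k : ℤ) : ∃ k', C.Gap r k' ∧ Φ r k' = Φ r k := by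
  by_cases hk : C.Gap r k
  · exact ⟨k, hk, rfl⟩
  · simp only [Gap, not_forall, not_not] at hk
    obtain ⟨w, rfl, hl, hr⟩ := hk
    exact ⟨C.right w, C.gap_right w, (hΦ.eq_on_bar (by omega) hr.le).symm⟩

theorem nonpos (hΦ : C.IsMoment Φ) (r k : ℤ) : Φ r k ≤ 0 := by
  by_contra! hpos
  obtain ⟨_, ⟨⟨r₀, k₀⟩, rfl⟩, hmax⟩ :=
    exists_max_image _ id hΦ.finite_range ⟨_, mem_range_self ((0 : ℤ), (0 : ℤ))⟩
  replace hmax (r k : ℤ) : Φ r k ≤ Φ r₀ k₀ := hmax _ (mem_range_self (r, k))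
  have climb (n : ℕ) : ∃ k, Φ (r₀ + n) k = Φ r₀ k₀ := by
    induction n with
    | zero => exact ⟨k₀, by simp⟩
    | succ n ih =>
      obtain ⟨k, hk⟩ := ih
      obtain ⟨k', hgap, hk'⟩ := hΦ.exists_gap_eq (r₀ + n) k
      have := hΦ.convex hgap
      refine ⟨k', (hmax _ _).antisymm ?_⟩
      push_cast
      rw [← add_assoc]
      linarith [hmax (r₀ + n - 1) k']
  obtain ⟨R, hR⟩ := Filter.eventually_atTop.1 hΦ.eq_zero_above
  obtain ⟨k', hk'⟩ := climb (R - r₀).toNat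
  rw [hR _ (by omega)] at hk'
  linarith [hmax r k]

theorem vertical_eq_zero (hΦ : C.IsMoment Φ) {r k : ℤ} (hk : C.Gap r k) (h0 : Φ r k = 0) :
    Φ (r + 1) k = 0 ∧ Φ (r - 1) k = 0 := by
  have := hΦ.convex hk
  have := hΦ.nonpos (r + 1) k
  have := hΦ.nonpos (r - 1) k
  constructor <;> linarith

theorem eq_zero_of_vert (hΦ : C.IsMoment Φ) {u v : V} (h : C.Vert u v)
    (h0 : Φ (C.row u + 1) (C.col u v) = 0) {r : ℤ} (hu : C.row u + 1 ≤ r) (hv : r ≤ C.row v) :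
    Φ r (C.col u v) = 0 := by
  induction r, hu using Int.leInduction with
  | base => exact h0
  | succ r hr ih =>
    exact (hΦ.vertical_eq_zero (C.gap_col h (by omega) (by omega)) (ih (by omega))).1

theorem ne_zero_of_vert (hΦ : C.IsMoment Φ) {a b : V} (h : C.Vert a b) {m : ℤ}
    (hne : ∀ i, C.col a b ≤ i → i < m → Φ (C.row a + 1) i ≠ 0) {r : ℤ} (ha : C.row a + 1 ≤ r)
    (hb : r ≤ C.row b) {i : ℤ} (hi : C.col a b ≤ i) (him : i < m) (hgap : C.Gap r i) :
    Φ r i ≠ 0 := by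
  induction r, ha using Int.leInduction generalizing i with
  | base => exact hne i hi him
  | succ r hr ih =>
    intro h0
    have hri : Φ r i = 0 := by simpa using (hΦ.vertical_eq_zero hgap h0).2
    by_cases hk : C.Gap r i
    · exact ih (by omega) hi him hk hri
    · simp only [Gap, not_forall, not_not] at hk
      obtain ⟨w, rfl, hl, hr⟩ := hk
      have := C.vert_bar h (w := w) (by omega) (by omega)
      refine ih (by omega) (by omega) (by omega) (C.gap_left_sub_one w) ?_
      rw [hΦ.eq_on_bar le_rfl (by omega), ← hΦ.eq_on_bar (by omega) hr.le, hri]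

/-- The simplicity of the graph enters here: the edges bounding the wedge end at distinct bars. -/
theorem exists_eq_zero_of_wedge (hΦ : C.IsMoment Φ) {a b c : V} (hab : C.Vert a b)
    (hac : C.Vert a c) (hlt : C.col a b < C.col a c) (hb : Φ (C.row b) (C.right b) = 0)
    (hc : Φ (C.row c) (C.right c) = 0) :
    ∃ i, C.col a b ≤ i ∧ i < C.col a c ∧ Φ (C.row a + 1) i = 0 := by
  by_contra! hne
  have hbc : b ≠ c := fun h => hlt.ne (h ▸ rfl)
  have hab' := C.row_lt_row hab
  have hac' := C.row_lt_row hac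
  obtain ⟨hbl, hbr⟩ := C.col_mem_top hab
  obtain ⟨hcl, hcr⟩ := C.col_mem_top hac
  rcases le_or_gt (C.row b) (C.row c) with hle | hgt
  · have hright : C.right b < C.col a c := by
      rcases hle.lt_or_eq with hlt | heq
      · have := C.vert_bar hac hab' hlt
        omega
      · have := C.bar_bar hbc heq
        omega
    exact hΦ.ne_zero_of_vert hab hne hab' le_rfl hbr hright (C.gap_right b) hb
  · have hleft := C.vert_bar hab hac' hgt
    refine hΦ.ne_zero_of_vert hab hne hac' hgt.le (i := C.left c - 1) (by omega)
      (by omega) (C.gap_left_sub_one c) ?_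
    rw [hΦ.eq_on_bar le_rfl (by omega), hc]

theorem exists_vert_eq_zero (hΦ : C.IsMoment Φ) {a b : V} (hab : C.Vert a b)
    (hne : Φ (C.row a + 1) (C.col a b) ≠ 0) (ha : Φ (C.row a) (C.right a) = 0) :
    ∃ c, C.Vert a c ∧ C.col a b < C.col a c ∧ Φ (C.row a + 1) (C.col a c) = 0 ∧
      ∀ i, C.col a b ≤ i → i < C.col a c → Φ (C.row a + 1) i ≠ 0 := by
  have hright := (hΦ.vertical_eq_zero (C.gap_right a) ha).1
  obtain ⟨m, ⟨hm, hm0⟩, hmin⟩ := Int.exists_least_of_bdd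
    (P := fun m => C.col a b ≤ m ∧ Φ (C.row a + 1) m = 0) ⟨_, fun _ => And.left⟩
    ⟨_, (C.col_mem_bot hab).2, hright⟩
  have hne' (i : ℤ) (hi : C.col a b ≤ i) (him : i < m) : Φ (C.row a + 1) i ≠ 0 :=
    fun h => him.not_ge (hmin i ⟨hi, h⟩)
  have hlt : C.col a b < m := hm.lt_of_ne (by rintro rfl; exact hne hm0)
  obtain ⟨a', c, hac, rfl, ha', hc⟩ :=
    hΦ.exists_vert (hm0.symm ▸ hne' (m - 1) (by omega) (by omega))
  obtain rfl : a' = a := by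
    by_contra haa
    have := hmin _ ⟨(C.col_mem_bot hab).2, hright⟩
    have := (C.col_mem_bot hab).1
    obtain ⟨hl', hr'⟩ := C.col_mem_bot hac
    rcases (Int.lt_add_one_iff.1 ha').lt_or_eq with h | h
    · have := C.vert_bar hac h (by omega)
      omega
    · have := C.bar_bar haa h
      omega
  exact ⟨c, hac, hlt, hm0, hne'⟩

theorem eq_zero (hΦ : C.IsMoment Φ) (r k : ℤ) : Φ r k = 0 := by
  by_contra hne
  obtain ⟨K, hK⟩ := Filter.eventually_atBot.1 hΦ.eq_zero_left
  obtain ⟨k, ⟨r, hr⟩, hmin⟩ := Int.exists_least_of_bdd (P := fun k => ∃ r, Φ r k ≠ 0)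
    ⟨K, fun k ⟨r, hr⟩ => (not_le.1 fun h => hr (hK k h r)).le⟩ ⟨k, r, hne⟩
  have hleft (r i : ℤ) (hi : i < k) : Φ r i = 0 := by
    by_contra h
    exact hi.not_ge (hmin i ⟨r, h⟩)
  obtain ⟨a, b, hab, rfl, har, hrb⟩ :=
    hΦ.exists_vert ((hleft r (k - 1) (by omega)).trans_ne hr.symm)
  have zero_of_bar (w : V) (hw : C.col a b ∈ Icc (C.left w) (C.right w)) :
      Φ (C.row w) (C.right w) = 0 := by
    rw [← hΦ.eq_on_bar (k := C.col a b - 1) (by linarith [hw.1]) (by linarith [hw.2])]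
    exact hleft _ _ (by omega)
  have hne' : Φ (C.row a + 1) (C.col a b) ≠ 0 :=
    fun h => hr (hΦ.eq_zero_of_vert hab h har hrb.le)
  obtain ⟨c, hac, hlt, hm, hfill⟩ :=
    hΦ.exists_vert_eq_zero hab hne' (zero_of_bar a (C.col_mem_bot hab))
  have hc : Φ (C.row c) (C.right c) = 0 := by
    obtain ⟨hl, hr⟩ := C.col_mem_top hac
    rw [← hΦ.eq_on_bar (by omega) hr]
    exact hΦ.eq_zero_of_vert hac hm (C.row_lt_row hac) le_rfl
  obtain ⟨i, hi, hi', h0⟩ :=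
    hΦ.exists_eq_zero_of_wedge hab hac hlt (zero_of_bar b (C.col_mem_top hab)) hc
  exact hfill i hi hi' h0

end IsMoment

end BarLayout

/-! ### Equilibrium of forces -/

namespace BarLayout

/-- The objects met by a row of a bar layout: the bars lying in it and the vertical edges
crossing it. -/
inductive Item (V : Type*)
  | bar (w : V)
  | edge (u v : V)

namespace Item

variable {V : Type*}

/-- The lower endpoint of an item; for a bar, the bar itself. -/
def bot : Item V → V
  | bar w => w
  | edge u _ => u

/-- The upper endpoint of an item; for a bar, the bar itself. -/
def top : Item V → V
  | bar w => w
  | edge _ v => v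

instance [Finite V] : Finite (Item V) :=
  Finite.of_surjective (Sum.elim bar fun e : V × V => edge e.1 e.2) fun
    | bar w => ⟨.inl w, rfl⟩
    | edge u v => ⟨.inr (u, v), rfl⟩

end Item

variable {V : Type*} (C : BarLayout V)

/-- The leftmost column of an item. -/
def lo : Item V → ℤ
  | .bar w => C.left w
  | .edge u v => C.col u v

/-- The rightmost column of an item. -/
def hi : Item V → ℤ
  | .bar w => C.right w
  | .edge u v => C.col u v

/-- The item is a bar in row `j` or a vertical edge crossing row `j` strictly between its ends. -/
def MeetsRow (j : ℤ) : Item V → Prop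
  | .bar w => C.row w = j
  | .edge u v => C.Vert u v ∧ C.row u < j ∧ j < C.row v

/-- The affine parameter on the item `A`, from its lower to its upper endpoint, of its point at
height `t`. For a bar it is `0`, by division by zero. -/
noncomputable def param (t : ℝ) (A : Item V) : ℝ :=
  (t - C.row A.bot) / (C.row A.top - C.row A.bot)

/-- The abscissa at height `t` of the item `A`, drawn straight between its endpoints, as a
function of the abscissas of the vertices. -/
noncomputable def interp (t : ℝ) (A : Item V) : (V → ℝ) →ₗ[ℝ] ℝ :=
  AffineMap.lineMap (LinearMap.proj A.bot) (LinearMap.proj A.top) (C.param t A)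

variable {C}

theorem lo_le_hi (A : Item V) : C.lo A ≤ C.hi A := by
  cases A with
  | bar w => exact C.left_le_right w
  | edge u v => exact le_rfl

namespace MeetsRow

variable {j : ℤ} {A B : Item V}

theorem row_bot_le (h : C.MeetsRow j A) : C.row A.bot ≤ j := by
  cases A with
  | bar w => exact h.le
  | edge u v => exact h.2.1.le

theorem le_row_top (h : C.MeetsRow j A) : j ≤ C.row A.top := by
  cases A with
  | bar w => exact h.ge
  | edge u v => exact h.2.2.le

theorem hi_lt_lo_or (hA : C.MeetsRow j A) (hB : C.MeetsRow j B) (hne : A ≠ B) :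
    C.hi A < C.lo B ∨ C.hi B < C.lo A := by
  cases A with
  | bar w =>
    cases B with
    | bar w' => exact C.bar_bar (fun h => hne (h ▸ rfl)) (hA.trans hB.symm)
    | edge u v =>
      subst hA
      exact (C.vert_bar hB.1 hB.2.1 hB.2.2).symm
  | edge u v =>
    cases B with
    | bar w =>
      subst hB
      exact C.vert_bar hA.1 hA.2.1 hA.2.2
    | edge u' v' =>
      refine lt_or_gt_of_ne fun h => hne ?_
      obtain ⟨rfl, rfl⟩ := C.vert_vert hA.1 hB.1 h (hA.2.1.trans hB.2.2) (hB.2.1.trans hA.2.2)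
      rfl

theorem gap_hi (h : C.MeetsRow j A) : C.Gap j (C.hi A) := by
  cases A with
  | bar w =>
    subst h
    exact C.gap_right w
  | edge u v => exact C.gap_col h.1 h.2.1 h.2.2

theorem param_mem_Icc (h : C.MeetsRow j A) : C.param j A ∈ Icc 0 1 := by
  have hbot : (C.row A.bot : ℝ) ≤ j := by exact_mod_cast h.row_bot_le
  have htop : (j : ℝ) ≤ C.row A.top := by exact_mod_cast h.le_row_top
  exact ⟨div_nonneg (by linarith) (by linarith), div_le_one_of_le₀ (by linarith) (by linarith)⟩

end MeetsRow

theorem interp_apply (t : ℝ) (A : Item V) (X : V → ℝ) :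
    C.interp t A X = AffineMap.lineMap (X A.bot) (X A.top) (C.param t A) := by
  simp [interp, AffineMap.lineMap_apply_module]

theorem interp_congr {t : ℝ} {A : Item V} {X Y : V → ℝ} (hbot : X A.bot = Y A.bot)
    (htop : X A.top = Y A.top) : C.interp t A X = C.interp t A Y := by
  rw [interp_apply, interp_apply, hbot, htop]

@[simp]
theorem interp_const (t : ℝ) (A : Item V) (a : ℝ) : C.interp t A (fun _ => a) = a := by
  simp [interp_apply]

@[simp]
theorem interp_bar (t : ℝ) (w : V) (X : V → ℝ) : C.interp t (.bar w) X = X w := by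
  simp [interp_apply, Item.bot, Item.top]

@[simp]
theorem interp_row_bot (u v : V) (X : V → ℝ) : C.interp (C.row u) (.edge u v) X = X u := by
  simp [interp_apply, param, Item.bot]

theorem interp_row_top {u v : V} (h : C.row u < C.row v) (X : V → ℝ) :
    C.interp (C.row v) (.edge u v) X = X v := by
  have : (C.row v - C.row u : ℝ) ≠ 0 := sub_ne_zero.2 (by exact_mod_cast h.ne')
  simp [interp_apply, param, Item.bot, Item.top, this]

theorem MeetsRow.interp_row {j : ℤ} {A : Item V} (h : C.MeetsRow j A) :
    C.interp j A (fun w => (C.row w : ℝ)) = j := by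
  cases A with
  | bar w => exact (interp_bar _ _ _).trans (congrArg _ h)
  | edge u v =>
    have : (C.row v - C.row u : ℝ) ≠ 0 :=
      sub_ne_zero.2 (by exact_mod_cast (h.2.1.trans h.2.2).ne')
    simp only [interp_apply, param, Item.bot, Item.top, AffineMap.lineMap_apply_ring']
    field_simp
    ring

theorem MeetsRow.interp_mono {j : ℤ} {A : Item V} (h : C.MeetsRow j A) {X Y : V → ℝ}
    (hXY : X ≤ Y) : C.interp j A X ≤ C.interp j A Y := by
  simp only [interp_apply]
  exact lineMap_mono_endpoints (hXY _) (hXY _) h.param_mem_Icc.1 h.param_mem_Icc.2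

variable (C)

/-- The moment arm about a row of a force applied `z` rows below it; forces applied above the row
do not count. -/
def ramp (z : ℤ) : ℝ := (max z 0 : ℤ)

theorem ramp_of_nonneg {z : ℤ} (h : 0 ≤ z) : ramp z = z := by rw [ramp, max_eq_left h]

theorem ramp_of_nonpos {z : ℤ} (h : z ≤ 0) : ramp z = 0 := by
  rw [ramp, max_eq_right h, Int.cast_zero]

theorem ramp_second_diff (z : ℤ) :
    ramp (z + 1) + ramp (z - 1) - 2 * ramp z = if z = 0 then 1 else 0 := by
  rcases lt_trichotomy z 0 with h | rfl | h
  · rw [ramp_of_nonpos (by omega), ramp_of_nonpos (by omega), ramp_of_nonpos h.le, if_neg h.ne]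
    norm_num
  · simp [ramp]
  · rw [ramp_of_nonneg (by omega), ramp_of_nonneg (by omega), ramp_of_nonneg h.le, if_neg h.ne']
    push_cast
    ring

/-- The bending moment about row `r` of a unit force applied to the item `A` in row `j` and of the
reactions at its endpoints. -/
noncomputable def moment (j : ℤ) (A : Item V) (r : ℤ) : ℝ :=
  ramp (r - j) - C.interp j A (fun w => ramp (r - C.row w))

variable {C}

theorem moment_second_diff (j : ℤ) (A : Item V) (r : ℤ) :
    C.moment j A (r + 1) + C.moment j A (r - 1) - 2 * C.moment j A r =
      (if r = j then 1 else 0) - C.interp j A (fun w => if C.row w = r then 1 else 0) := by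
  have second_diff (i : ℤ) :
      ramp (r + 1 - i) + ramp (r - 1 - i) - 2 * ramp (r - i) = if r = i then 1 else 0 := by
    have := ramp_second_diff (r - i)
    simpa only [sub_add_eq_add_sub, sub_right_comm r i 1, sub_eq_zero] using this
  simp only [moment, interp_apply, AffineMap.lineMap_apply_ring', eq_comm (b := r), ← second_diff]
  ring

namespace MeetsRow

variable {j : ℤ} {A : Item V}

theorem moment_eq_zero_of_le_row_bot (h : C.MeetsRow j A) {r : ℤ} (hr : r ≤ C.row A.bot) :
    C.moment j A r = 0 := by
  have := h.row_bot_le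
  have := h.le_row_top
  have hends : C.interp j A (fun w => ramp (r - C.row w)) = C.interp j A (fun _ => 0) :=
    interp_congr (ramp_of_nonpos (by omega)) (ramp_of_nonpos (by omega))
  rw [moment, hends, interp_const, ramp_of_nonpos (by omega), sub_zero]

theorem moment_eq_zero_of_row_top_le (h : C.MeetsRow j A) {r : ℤ} (hr : C.row A.top ≤ r) :
    C.moment j A r = 0 := by
  have := h.row_bot_le
  have := h.le_row_top
  have hends : C.interp j A (fun w => ramp (r - C.row w)) =
      C.interp j A ((fun _ => (r : ℝ)) - fun w => (C.row w : ℝ)) := by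
    apply interp_congr <;> rw [ramp_of_nonneg (by omega)] <;> simp
  rw [moment, hends, map_sub, interp_const, h.interp_row, ramp_of_nonneg (by omega)]
  push_cast
  ring

end MeetsRow

variable (C) in
/-- The contribution of the item `A`, loaded in row `j`, to the moment to the left of the strip
between the columns `k` and `k + 1`. -/
noncomputable def partialMoment (j : ℤ) (A : Item V) (r k : ℤ) : ℝ :=
  if C.hi A ≤ k then C.moment j A r else 0

namespace MeetsRow

variable {j : ℤ} {A : Item V}

theorem exists_vert_of_partialMoment_ne (h : C.MeetsRow j A) {r k : ℤ}
    (hne : C.partialMoment j A r (k - 1) ≠ C.partialMoment j A r k) :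
    ∃ u v, C.Vert u v ∧ C.col u v = k ∧ C.row u < r ∧ r < C.row v := by
  have hk : C.hi A = k := by
    by_contra hk
    refine hne (if_congr ?_ rfl rfl)
    omega
  have hr : C.moment j A r ≠ 0 := by
    intro h0
    simp [partialMoment, h0] at hne
  have hbot := lt_of_not_ge fun hr' => hr (h.moment_eq_zero_of_le_row_bot hr')
  have htop := lt_of_not_ge fun hr' => hr (h.moment_eq_zero_of_row_top_le hr')
  cases A with
  | bar w => exact absurd hbot htop.not_gt
  | edge u v => exact ⟨u, v, h.1, hk, hbot, htop⟩

theorem finite_range_partialMoment (h : C.MeetsRow j A) :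
    (range fun q : ℤ × ℤ => C.partialMoment j A q.1 q.2).Finite := by
  refine (((finite_Icc (C.row A.bot) (C.row A.top)).image (C.moment j A)).insert 0).subset ?_
  rintro _ ⟨⟨r, k⟩, rfl⟩
  simp only [partialMoment]
  split_ifs
  · by_cases hbot : r ≤ C.row A.bot
    · exact .inl (h.moment_eq_zero_of_le_row_bot hbot)
    by_cases htop : C.row A.top ≤ r
    · exact .inl (h.moment_eq_zero_of_row_top_le htop)
    exact .inr ⟨r, ⟨(not_le.1 hbot).le, (not_le.1 htop).le⟩, rfl⟩
  · exact .inl rfl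

theorem hi_le_iff_of_gap (h : C.MeetsRow j A) {w : V} {k : ℤ} (hgap : C.Gap (C.row w) k)
    (hw : w = A.bot ∨ w = A.top) : C.hi A ≤ k ↔ C.right w ≤ k := by
  cases A with
  | bar u =>
    obtain rfl : w = u := hw.elim id id
    rfl
  | edge u v =>
    have hcol : C.col u v ∈ Icc (C.left w) (C.right w) := by
      rcases hw with rfl | rfl
      exacts [C.col_mem_bot h.1, C.col_mem_top h.1]
    have := hgap w rfl
    exact ⟨fun hk => not_lt.1 fun hlt => this ⟨hcol.1.trans hk, hlt⟩, hcol.2.trans⟩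

theorem partialMoment_second_diff (h : C.MeetsRow j A) {r k : ℤ} (hgap : C.Gap r k) :
    C.partialMoment j A (r + 1) k + C.partialMoment j A (r - 1) k - 2 * C.partialMoment j A r k =
      (if C.hi A ≤ k ∧ r = j then 1 else 0) -
        C.interp j A (fun w => if C.row w = r ∧ C.right w ≤ k then 1 else 0) := by
  let left (w : V) : ℝ := if C.row w = r ∧ C.right w ≤ k then 1 else 0
  let left' (w : V) : ℝ := if C.hi A ≤ k ∧ C.row w = r then 1 else 0
  have hend (w : V) (hw : w = A.bot ∨ w = A.top) : left w = left' w := by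
    refine if_congr ?_ rfl rfl
    rw [and_comm]
    exact and_congr_left fun hr => (h.hi_le_iff_of_gap (hr ▸ hgap) hw).symm
  rw [show C.interp j A left = C.interp j A left' from
    interp_congr (hend _ (.inl rfl)) (hend _ (.inr rfl))]
  by_cases hk : C.hi A ≤ k
  · simp [partialMoment, left', hk, moment_second_diff]
  · simp [partialMoment, left', hk]

end MeetsRow

section Equilibrium

variable {ι : Type*} [Fintype ι] {J : ι → ℤ} {A B : ι → Item V} {c : ι → ℝ}

variable (C J A B c) in
/-- The total bending moment when, for every `i`, a force `c i` pushes the items `A i` and `B i`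
apart in row `J i`. -/
noncomputable def totalMoment (r k : ℤ) : ℝ :=
  ∑ i, c i * (C.partialMoment (J i) (A i) r k - C.partialMoment (J i) (B i) r k)

theorem totalMoment_second_diff (hA : ∀ i, C.MeetsRow (J i) (A i))
    (hB : ∀ i, C.MeetsRow (J i) (B i)) (hAB : ∀ i, C.hi (A i) < C.lo (B i))
    (heq : ∑ i, c i • (C.interp (J i) (B i) - C.interp (J i) (A i)) = 0) {r k : ℤ}
    (hgap : C.Gap r k) :
    C.totalMoment J A B c (r + 1) k + C.totalMoment J A B c (r - 1) k -
        2 * C.totalMoment J A B c r k =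
      ∑ i, c i * if r = J i ∧ C.hi (A i) ≤ k ∧ k < C.hi (B i) then 1 else 0 := by
  let left (w : V) : ℝ := if C.row w = r ∧ C.right w ≤ k then 1 else 0
  have reactions : ∑ i, c i * (C.interp (J i) (B i) left - C.interp (J i) (A i) left) = 0 := by
    simpa using LinearMap.congr_fun heq left
  have loads (i : ι) : ((if C.hi (A i) ≤ k ∧ r = J i then 1 else 0) -
      if C.hi (B i) ≤ k ∧ r = J i then 1 else 0) =
        if r = J i ∧ C.hi (A i) ≤ k ∧ k < C.hi (B i) then (1 : ℝ) else 0 := by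
    have := hAB i
    have := C.lo_le_hi (B i)
    grind
  calc
    _ = ∑ i, (c i * (if r = J i ∧ C.hi (A i) ≤ k ∧ k < C.hi (B i) then 1 else 0) +
          c i * (C.interp (J i) (B i) left - C.interp (J i) (A i) left)) := by
      simp only [totalMoment, Finset.mul_sum, ← Finset.sum_add_distrib, ← Finset.sum_sub_distrib]
      refine Finset.sum_congr rfl fun i _ => ?_
      linear_combination c i * ((hA i).partialMoment_second_diff hgap -
        (hB i).partialMoment_second_diff hgap + loads i)
    _ = _ := by rw [Finset.sum_add_distrib, reactions, add_zero]

theorem isMoment_totalMoment (hc : ∀ i, 0 ≤ c i) (hA : ∀ i, C.MeetsRow (J i) (A i))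
    (hB : ∀ i, C.MeetsRow (J i) (B i)) (hAB : ∀ i, C.hi (A i) < C.lo (B i))
    (heq : ∑ i, c i • (C.interp (J i) (B i) - C.interp (J i) (A i)) = 0) :
    C.IsMoment (C.totalMoment J A B c) where
  exists_vert {r k} hne := by
    by_contra hnone
    refine hne (Finset.sum_congr rfl fun i _ => ?_)
    rw [of_not_not fun h => hnone ((hA i).exists_vert_of_partialMoment_ne h),
      of_not_not fun h => hnone ((hB i).exists_vert_of_partialMoment_ne h)]
  convex {r k} hgap := by
    have : 0 ≤ ∑ i, c i * if r = J i ∧ C.hi (A i) ≤ k ∧ k < C.hi (B i) then 1 else 0 :=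
      Finset.sum_nonneg fun i _ => mul_nonneg (hc i) (by positivity)
    linarith [totalMoment_second_diff hA hB hAB heq hgap]
  finite_range := by
    have hfin (i : ι) := (hA i).finite_range_partialMoment.image2 (· - ·)
      (hB i).finite_range_partialMoment
    refine ((Finite.pi' hfin).image fun x => ∑ i, c i * x i).subset ?_
    rintro _ ⟨q, rfl⟩
    exact ⟨fun i => _, fun i => mem_image2_of_mem (mem_range_self q) (mem_range_self q), rfl⟩
  eq_zero_above := by
    filter_upwards [Filter.eventually_all.2 fun i => Filter.eventually_ge_atTop (C.row (A i).top),
      Filter.eventually_all.2 fun i => Filter.eventually_ge_atTop (C.row (B i).top)]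
      with r hrA hrB k
    refine Finset.sum_eq_zero fun i _ => ?_
    simp [partialMoment, (hA i).moment_eq_zero_of_row_top_le (hrA i),
      (hB i).moment_eq_zero_of_row_top_le (hrB i)]
  eq_zero_left := by
    filter_upwards [Filter.eventually_all.2 fun i => Filter.eventually_lt_atBot (C.hi (A i)),
      Filter.eventually_all.2 fun i => Filter.eventually_lt_atBot (C.hi (B i))] with k hkA hkB r
    refine Finset.sum_eq_zero fun i _ => ?_
    simp [partialMoment, (hkA i).not_ge, (hkB i).not_ge]

theorem eq_zero_of_equilibrium (hc : ∀ i, 0 ≤ c i) (hA : ∀ i, C.MeetsRow (J i) (A i))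
    (hB : ∀ i, C.MeetsRow (J i) (B i)) (hAB : ∀ i, C.hi (A i) < C.lo (B i))
    (heq : ∑ i, c i • (C.interp (J i) (B i) - C.interp (J i) (A i)) = 0) (i : ι) : c i = 0 := by
  have hΦ := isMoment_totalMoment hc hA hB hAB heq
  have hsum := totalMoment_second_diff hA hB hAB heq (hA i).gap_hi
  simp only [hΦ.eq_zero] at hsum
  have hterm := (Finset.sum_eq_zero_iff_of_nonneg fun i _ =>
    mul_nonneg (hc i) (by positivity)).1 (hsum.symm.trans (by norm_num)) i (Finset.mem_univ i)
  simpa [(hAB i).trans_le (C.lo_le_hi (B i))] using hterm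

end Equilibrium

variable (C) in
/-- In every row of `C` that contains a bar, the items meeting the row keep their order from left
to right when the vertex `v` is moved to the abscissa `X v` and the edges are drawn straight. -/
def IsOrdered (X : V → ℝ) : Prop :=
  ∀ w A B, C.MeetsRow (C.row w) A → C.MeetsRow (C.row w) B → C.hi A < C.lo B →
    C.interp (C.row w) A X < C.interp (C.row w) B X

variable (C)

theorem exists_isOrdered [Finite V] : ∃ X, C.IsOrdered X := by
  let ι := {q : V × Item V × Item V // C.MeetsRow (C.row q.1) q.2.1 ∧
    C.MeetsRow (C.row q.1) q.2.2 ∧ C.hi q.2.1 < C.lo q.2.2}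
  have := Fintype.ofFinite ι
  rcases exists_forall_pos_or_exists_sum_smul_eq_zero fun q : ι =>
    C.interp (C.row q.1.1) q.1.2.2 - C.interp (C.row q.1.1) q.1.2.1 with ⟨X, hX⟩ | ⟨c, hc, heq⟩
  · exact ⟨X, fun w A B hA hB hAB => sub_pos.1 (hX ⟨(w, A, B), hA, hB, hAB⟩)⟩
  · have h0 := eq_zero_of_equilibrium hc.1 (fun q : ι => q.2.1) (fun q => q.2.2.1)
      (fun q => q.2.2.2) heq
    simpa [h0] using hc.2

theorem exists_int_isOrdered [Finite V] : ∃ X : V → ℤ, C.IsOrdered fun v => X v := by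
  obtain ⟨X, hX⟩ := C.exists_isOrdered
  let gap (q : V × Item V × Item V) : ℝ :=
    C.interp (C.row q.1) q.2.2 X - C.interp (C.row q.1) q.2.1 X
  obtain ⟨N, hN⟩ : ∃ N : ℝ, ∀ q, 0 < gap q → 1 < N * gap q := by
    refine (Filter.eventually_all.2 fun q => ?_).exists (f := Filter.atTop)
    by_cases hq : 0 < gap q
    · filter_upwards [(Filter.tendsto_id.atTop_mul_const hq).eventually_gt_atTop 1]
        with N hN _ using hN
    · simp [hq]
  refine ⟨fun v => ⌊(N • X) v⌋, fun w A B hA hB hAB => ?_⟩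
  have hgap := hN (w, A, B) (sub_pos.2 (hX w A B hA hB hAB))
  have hupper : C.interp (C.row w) A (fun v => ⌊(N • X) v⌋) ≤ C.interp (C.row w) A (N • X) :=
    hA.interp_mono fun v => Int.floor_le _
  have hlower : C.interp (C.row w) B (N • X - fun _ => 1) ≤
      C.interp (C.row w) B (fun v => ⌊(N • X) v⌋) :=
    hB.interp_mono fun v => (Int.sub_one_lt_floor _).le
  rw [map_sub, interp_const, map_smul, smul_eq_mul] at hlower
  rw [map_smul, smul_eq_mul] at hupper
  rw [mul_sub] at hgap
  exact hupper.trans_lt (by linarith)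

end BarLayout

/-! ### Straight-line drawing of a bar layout -/

namespace BarLayout

section StraightLine

variable {V : Type*} {C : BarLayout V} {X : V → ℝ}

theorem interp_lineMap (A : Item V) (X : V → ℝ) (a b s : ℝ) :
    C.interp (AffineMap.lineMap a b s) A X =
      AffineMap.lineMap (C.interp a A X) (C.interp b A X) s := by
  simp only [interp_apply, param, AffineMap.lineMap_apply_ring']
  ring

theorem interp_lt_interp_of_mem_Ioo {A B : Item V} {a b t : ℝ} (ht : t ∈ Ioo a b)
    (ha : C.interp a A X ≤ C.interp a B X) (hb : C.interp b A X ≤ C.interp b B X)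
    (hlt : C.interp a A X < C.interp a B X ∨ C.interp b A X < C.interp b B X) :
    C.interp t A X < C.interp t B X := by
  replace ht := Ioo_subset_openSegment ht
  rw [openSegment_eq_image_lineMap] at ht
  obtain ⟨s, ⟨hs₀, hs₁⟩, rfl⟩ := ht
  simp only [interp_lineMap]
  rcases hlt with hlt | hlt
  · exact (lineMap_strict_mono_left hlt hs₁).trans_le (lineMap_mono_right hb hs₀.le)
  · exact (lineMap_mono_left ha hs₁.le).trans_lt (lineMap_strict_mono_right hlt hs₀)

open Classical in
variable (C) in
/-- The item that represents the vertical edge from `u` to `v` in row `j`: at its ends, the edge is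
represented by the bar it is attached to. -/
noncomputable def itemAt (u v : V) (j : ℤ) : Item V :=
  if j = C.row u then .bar u else if j = C.row v then .bar v else .edge u v

theorem itemAt_eq_bar {u v w : V} {j : ℤ} (h : C.itemAt u v j = .bar w) : w = u ∨ w = v := by
  grind [itemAt]

theorem itemAt_eq_itemAt {u v u' v' : V} {j : ℤ} (h : C.itemAt u v j = C.itemAt u' v' j) :
    (u = u' ∧ v = v') ∨ ∃ w ∈ ({u, v} ∩ {u', v'} : Set V), C.row w = j := by
  grind [itemAt]

theorem meetsRow_itemAt {u v : V} (h : C.Vert u v) {j : ℤ} (hj : j ∈ Icc (C.row u) (C.row v)) :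
    C.MeetsRow j (C.itemAt u v j) := by
  unfold itemAt
  split_ifs with hu hv
  · exact hu.symm
  · exact hv.symm
  · exact ⟨h, hj.1.lt_of_ne' hu, hj.2.lt_of_ne hv⟩

theorem interp_itemAt {u v : V} (h : C.Vert u v) (j : ℤ) (X : V → ℝ) :
    C.interp j (C.itemAt u v j) X = C.interp j (.edge u v) X := by
  unfold itemAt
  split_ifs with hu hv
  · simp [hu]
  · simp [hv, interp_row_top (C.row_lt_row h)]
  · rfl

theorem interp_eq_of_itemAt_eq {u v u' v' : V} (h : C.Vert u v) (h' : C.Vert u' v') {j : ℤ}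
    (heq : C.itemAt u v j = C.itemAt u' v' j) :
    C.interp j (.edge u v) X = C.interp j (.edge u' v') X := by
  rw [← interp_itemAt h, ← interp_itemAt h', heq]

theorem col_mem_Icc_itemAt {u v : V} (h : C.Vert u v) (j : ℤ) :
    C.col u v ∈ Icc (C.lo (C.itemAt u v j)) (C.hi (C.itemAt u v j)) := by
  unfold itemAt
  split_ifs
  · exact C.col_mem_bot h
  · exact C.col_mem_top h
  · exact ⟨le_rfl, le_rfl⟩

variable (C X) in
/-- The point of the vertex `v` in the straight-line drawing with abscissas `X`. -/
def point (v : V) : ℝ × ℝ := (X v, C.row v)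

theorem eq_interp_of_mem_segment {u v : V} (h : C.Vert u v) {z : ℝ × ℝ}
    (hz : z ∈ segment ℝ (C.point X u) (C.point X v)) :
    z.2 ∈ Icc (C.row u : ℝ) (C.row v) ∧ z.1 = C.interp z.2 (.edge u v) X := by
  have hrow : (C.row u : ℝ) ≤ C.row v := by exact_mod_cast (C.row_lt_row h).le
  refine ⟨segment_subset_Icc hrow (Prod.segment_subset _ _ hz).2, ?_⟩
  rw [segment_eq_image_lineMap] at hz
  obtain ⟨s, -, rfl⟩ := hz
  rw [AffineMap.snd_lineMap, AffineMap.fst_lineMap]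
  simp [point, interp_lineMap, interp_row_top (C.row_lt_row h)]

theorem itemAt_of_mem_segment {u v : V} (h : C.Vert u v) {z : ℝ × ℝ}
    (hz : z ∈ segment ℝ (C.point X u) (C.point X v)) {j : ℤ} (hj : z.2 = j) :
    C.MeetsRow j (C.itemAt u v j) ∧ z.1 = C.interp j (C.itemAt u v j) X := by
  obtain ⟨hrow, hzX⟩ := eq_interp_of_mem_segment h hz
  rw [hj] at hrow hzX
  have hrow' : j ∈ Icc (C.row u) (C.row v) :=
    ⟨by exact_mod_cast hrow.1, by exact_mod_cast hrow.2⟩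
  exact ⟨meetsRow_itemAt h hrow', by rw [hzX, interp_itemAt h]⟩

theorem eq_point_of_mem_segment {u v x : V} (h : C.Vert u v) {z : ℝ × ℝ}
    (hz : z ∈ segment ℝ (C.point X u) (C.point X v)) (hx : x ∈ ({u, v} : Set V))
    (hzx : z.2 = C.row x) : C.point X x = z := by
  have hz₁ := (eq_interp_of_mem_segment h hz).2
  rw [hzx] at hz₁
  refine Prod.ext (Eq.trans ?_ hz₁.symm) hzx.symm
  rcases hx with rfl | hx
  · simp [point]
  · rw [mem_singleton_iff.1 hx, interp_row_top (C.row_lt_row h), point]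

variable (C) in
/-- The bars `c` and `d` see each other along their row, with `c` to the left of `d`: nothing else
in the row lies between them. -/
def Horiz (c d : V) : Prop :=
  C.row c = C.row d ∧ C.right c < C.left d ∧
    ∀ A, C.MeetsRow (C.row c) A → A ≠ .bar c → A ≠ .bar d →
      C.hi A < C.left c ∨ C.right d < C.lo A

theorem Horiz.ne {c d : V} (h : C.Horiz c d) : c ≠ d := by
  rintro rfl
  exact (C.left_le_right c).not_gt h.2.1

variable (C) in
/-- The vertices `u` and `v` are joined by an edge of the layout, oriented upwards or, if it is
horizontal, to the right. -/
def Joined (u v : V) : Prop := C.Vert u v ∨ C.Horiz u v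

namespace IsOrdered

theorem lt_of_right_lt_left (hX : C.IsOrdered X) {v w : V} (hrow : C.row v = C.row w)
    (h : C.right v < C.left w) : X v < X w := by
  simpa using hX v (.bar v) (.bar w) rfl hrow.symm h

theorem item_eq_of_interp_eq (hX : C.IsOrdered X) {w : V} {A B : Item V}
    (hA : C.MeetsRow (C.row w) A) (hB : C.MeetsRow (C.row w) B)
    (h : C.interp (C.row w) A X = C.interp (C.row w) B X) : A = B := by
  by_contra hne
  rcases hA.hi_lt_lo_or hB hne with hlt | hlt
  · exact (hX w A B hA hB hlt).ne h
  · exact (hX w B A hB hA hlt).ne' h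

theorem point_injective (hX : C.IsOrdered X) : Function.Injective (C.point X) := by
  intro v w h
  obtain ⟨hx, hrow⟩ : X v = X w ∧ C.row v = C.row w := by simpa [point] using h
  simpa using hX.item_eq_of_interp_eq (A := .bar v) (B := .bar w) (w := v) rfl hrow.symm (by simpa)

theorem segment_horiz_subset (hX : C.IsOrdered X) {c d : V} (h : C.Horiz c d) {z : ℝ × ℝ}
    (hz : z ∈ segment ℝ (C.point X c) (C.point X d)) :
    z.2 = C.row c ∧ z.1 ∈ Icc (X c) (X d) := by
  obtain ⟨h₁, h₂⟩ := Prod.segment_subset _ _ hz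
  simp only [point, ← h.1, segment_same] at h₁ h₂
  exact ⟨h₂, segment_subset_Icc (hX.lt_of_right_lt_left h.1 h.2.1).le h₁⟩

theorem interp_notMem_of_horiz (hX : C.IsOrdered X) {c d : V} (h : C.Horiz c d) {A : Item V}
    (hA : C.MeetsRow (C.row c) A) (hc : A ≠ .bar c) (hd : A ≠ .bar d) :
    C.interp (C.row c) A X < X c ∨ X d < C.interp (C.row c) A X := by
  refine (h.2.2 A hA hc hd).imp (fun hlt => ?_) fun hlt => ?_
  · simpa using hX c A (.bar c) hA rfl hlt
  · simpa using hX c (.bar d) A h.1.symm hA hlt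

theorem itemAt_eq_or_interp_lt (hX : C.IsOrdered X) {u v u' v' : V} (h : C.Vert u v)
    (h' : C.Vert u' v') (hcol : C.col u v < C.col u' v') {w : V}
    (hw : C.row w ∈ Icc (C.row u) (C.row v)) (hw' : C.row w ∈ Icc (C.row u') (C.row v')) :
    C.itemAt u v (C.row w) = C.itemAt u' v' (C.row w) ∨
      C.interp (C.row w) (.edge u v) X < C.interp (C.row w) (.edge u' v') X := by
  refine or_iff_not_imp_left.2 fun hne => ?_
  have hA := meetsRow_itemAt h hw
  have hB := meetsRow_itemAt h' hw'
  rw [← interp_itemAt h, ← interp_itemAt h']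
  refine hX w _ _ hA hB ((hA.hi_lt_lo_or hB hne).resolve_right fun hlt => ?_)
  have := (col_mem_Icc_itemAt h (C.row w)).1
  have := (col_mem_Icc_itemAt h' (C.row w)).2
  omega

theorem interp_lt_of_col_lt (hX : C.IsOrdered X) {u v u' v' : V} (h : C.Vert u v)
    (h' : C.Vert u' v') (hcol : C.col u v < C.col u' v') {t : ℝ}
    (ht : t ∈ Ioo (C.row u : ℝ) (C.row v)) (ht' : t ∈ Ioo (C.row u' : ℝ) (C.row v')) :
    C.interp t (.edge u v) X < C.interp t (.edge u' v') X := by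
  obtain ⟨a, ha, hta⟩ : ∃ a, C.row a = max (C.row u) (C.row u') ∧ (C.row a : ℝ) < t := by
    rcases le_total (C.row u) (C.row u') with hle | hle
    exacts [⟨u', (max_eq_right hle).symm, ht'.1⟩, ⟨u, (max_eq_left hle).symm, ht.1⟩]
  obtain ⟨b, hb, htb⟩ : ∃ b, C.row b = min (C.row v) (C.row v') ∧ t < (C.row b : ℝ) := by
    rcases le_total (C.row v) (C.row v') with hle | hle
    exacts [⟨v, (min_eq_left hle).symm, ht.2⟩, ⟨v', (min_eq_right hle).symm, ht'.2⟩]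
  have hab : C.row a < C.row b := by exact_mod_cast hta.trans htb
  have orda := hX.itemAt_eq_or_interp_lt h h' hcol (w := a) ⟨by omega, by omega⟩
    ⟨by omega, by omega⟩
  have ordb := hX.itemAt_eq_or_interp_lt h h' hcol (w := b) ⟨by omega, by omega⟩
    ⟨by omega, by omega⟩
  refine interp_lt_interp_of_mem_Ioo ⟨hta, htb⟩
    (orda.elim (interp_eq_of_itemAt_eq h h' · |>.le) le_of_lt)
    (ordb.elim (interp_eq_of_itemAt_eq h h' · |>.le) le_of_lt) ?_
  by_contra! hge
  have := itemAt_eq_itemAt (orda.resolve_right hge.1.not_gt)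
  have := itemAt_eq_itemAt (ordb.resolve_right hge.2.not_gt)
  grind

theorem col_eq_of_interp_eq (hX : C.IsOrdered X) {u v u' v' : V} (h : C.Vert u v)
    (h' : C.Vert u' v') {t : ℝ} (ht : t ∈ Ioo (C.row u : ℝ) (C.row v))
    (ht' : t ∈ Ioo (C.row u' : ℝ) (C.row v'))
    (heq : C.interp t (.edge u v) X = C.interp t (.edge u' v') X) :
    C.col u v = C.col u' v' := by
  rcases lt_trichotomy (C.col u v) (C.col u' v') with hlt | hcol | hlt
  · exact absurd heq (hX.interp_lt_of_col_lt h h' hlt ht ht').ne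
  · exact hcol
  · exact absurd heq (hX.interp_lt_of_col_lt h' h hlt ht' ht).ne'

theorem mem_image_of_vert_of_vert (hX : C.IsOrdered X) {u v u' v' : V} (h : C.Vert u v)
    (h' : C.Vert u' v') (hne : (u, v) ≠ (u', v')) {z : ℝ × ℝ}
    (hz : z ∈ segment ℝ (C.point X u) (C.point X v))
    (hz' : z ∈ segment ℝ (C.point X u') (C.point X v')) :
    z ∈ C.point X '' ({u, v} ∩ {u', v'}) := by
  by_cases hrow : ∃ w, z.2 = C.row w
  · obtain ⟨w, hw⟩ := hrow
    obtain ⟨hA, hzA⟩ := itemAt_of_mem_segment h hz hw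
    obtain ⟨hB, hzB⟩ := itemAt_of_mem_segment h' hz' hw
    obtain ⟨rfl, rfl⟩ | ⟨x, hx, hxw⟩ :=
      itemAt_eq_itemAt (hX.item_eq_of_interp_eq hA hB (hzA.symm.trans hzB))
    · exact absurd rfl hne
    · exact ⟨x, hx, eq_point_of_mem_segment h hz hx.1 (by rw [hw, hxw])⟩
  · push Not at hrow
    obtain ⟨⟨hu, hv⟩, hzX⟩ := eq_interp_of_mem_segment h hz
    obtain ⟨⟨hu', hv'⟩, hzX'⟩ := eq_interp_of_mem_segment h' hz'
    replace hu := hu.lt_of_ne' (hrow u)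
    replace hv := hv.lt_of_ne (hrow v)
    replace hu' := hu'.lt_of_ne' (hrow u')
    replace hv' := hv'.lt_of_ne (hrow v')
    have hcol := hX.col_eq_of_interp_eq h h' ⟨hu, hv⟩ ⟨hu', hv'⟩ (hzX.symm.trans hzX')
    obtain ⟨rfl, rfl⟩ := C.vert_vert h h' hcol (by exact_mod_cast hu.trans hv')
      (by exact_mod_cast hu'.trans hv)
    exact absurd rfl hne

theorem mem_image_of_vert_of_horiz (hX : C.IsOrdered X) {u v c d : V} (h : C.Vert u v)
    (h' : C.Horiz c d) {z : ℝ × ℝ} (hz : z ∈ segment ℝ (C.point X u) (C.point X v))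
    (hz' : z ∈ segment ℝ (C.point X c) (C.point X d)) :
    z ∈ C.point X '' ({u, v} ∩ {c, d}) := by
  obtain ⟨hzc, hcd⟩ := hX.segment_horiz_subset h' hz'
  obtain ⟨hA, hzA⟩ := itemAt_of_mem_segment h hz hzc
  obtain ⟨x, hx, hAx⟩ : ∃ x ∈ ({c, d} : Set V), C.itemAt u v (C.row c) = .bar x := by
    by_contra! hne
    have := hX.interp_notMem_of_horiz h' hA (hne c (by simp)) (hne d (by simp))
    rw [← hzA] at this
    exact this.elim hcd.1.not_gt hcd.2.not_gt
  have hxuv : x ∈ ({u, v} : Set V) := itemAt_eq_bar hAx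
  rw [hAx] at hA
  exact ⟨x, ⟨hxuv, hx⟩, eq_point_of_mem_segment h hz hxuv (by rw [hzc, show C.row x = _ from hA])⟩

theorem mem_pair_of_horiz (hX : C.IsOrdered X) {c d w : V} (h : C.Horiz c d)
    (hrow : C.row w = C.row c) (hw : X w ∈ Icc (X c) (X d)) : w = c ∨ w = d := by
  by_contra! hne
  have := hX.interp_notMem_of_horiz h (A := .bar w) hrow (by simpa using hne.1)
    (by simpa using hne.2)
  rw [interp_bar] at this
  exact this.elim hw.1.not_gt hw.2.not_gt

theorem mem_image_of_horiz_of_horiz (hX : C.IsOrdered X) {c d c' d' : V} (h : C.Horiz c d)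
    (h' : C.Horiz c' d') (hne : (c, d) ≠ (c', d')) {z : ℝ × ℝ}
    (hz : z ∈ segment ℝ (C.point X c) (C.point X d))
    (hz' : z ∈ segment ℝ (C.point X c') (C.point X d')) :
    z ∈ C.point X '' ({c, d} ∩ {c', d'}) := by
  obtain ⟨hzc, hcz, hzd⟩ := hX.segment_horiz_subset h hz
  obtain ⟨hzc', hcz', hzd'⟩ := hX.segment_horiz_subset h' hz'
  have hrow : C.row c = C.row c' := by exact_mod_cast hzc.symm.trans hzc'
  wlog hle : X c ≤ X c' generalizing c d c' d'
  · rw [inter_comm]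
    exact this h' h hne.symm hz' hz hzc' hcz' hzd' hzc hcz hzd hrow.symm (le_of_not_ge hle)
  obtain rfl | rfl := hX.mem_pair_of_horiz h hrow.symm ⟨hle, hcz'.trans hzd⟩
  · rcases le_total (X d) (X d') with hd | hd
    · have := hX.mem_pair_of_horiz h' h.1.symm ⟨hcz.trans hzd, hd⟩
      grind [h.ne]
    · have := hX.mem_pair_of_horiz h h'.1.symm ⟨hcz'.trans hzd', hd⟩
      grind [h'.ne]
  · exact ⟨c', by simp, Prod.ext (hcz'.antisymm hzd) hzc'.symm⟩

theorem mem_image_of_joined (hX : C.IsOrdered X) {u v x y : V} (h : C.Joined u v)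
    (h' : C.Joined x y) (hne : (u, v) ≠ (x, y)) {z : ℝ × ℝ}
    (hz : z ∈ segment ℝ (C.point X u) (C.point X v))
    (hz' : z ∈ segment ℝ (C.point X x) (C.point X y)) :
    z ∈ C.point X '' ({u, v} ∩ {x, y}) := by
  rcases h with h | h <;> rcases h' with h' | h'
  · exact hX.mem_image_of_vert_of_vert h h' hne hz hz'
  · exact hX.mem_image_of_vert_of_horiz h h' hz hz'
  · rw [inter_comm]
    exact hX.mem_image_of_vert_of_horiz h' h hz' hz
  · exact hX.mem_image_of_horiz_of_horiz h h' hne hz hz'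

theorem mem_pair_of_joined (hX : C.IsOrdered X) {u v w : V} (h : C.Joined u v)
    (hw : C.point X w ∈ segment ℝ (C.point X u) (C.point X v)) : w = u ∨ w = v := by
  rcases h with h | h
  · obtain ⟨hA, hwA⟩ := itemAt_of_mem_segment h hw rfl
    exact itemAt_eq_bar (hX.item_eq_of_interp_eq (B := .bar w) hA rfl (by simp [← hwA, point]))
  · obtain ⟨hrow, hwX⟩ := hX.segment_horiz_subset h hw
    exact hX.mem_pair_of_horiz h (by simpa [point] using hrow) hwX

end IsOrdered

end StraightLine

end BarLayout

/-! ### From visibility representations to bar layouts -/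

theorem chainSet_pair (P Q : Pt) : chainSet [P, Q] = segment ℝ P Q := by
  simp [chainSet, chainSegs]

theorem isSimpleChain_pair {P Q : Pt} (h : P ≠ Q) : IsSimpleChain [P, Q] := by
  refine ⟨le_rfl, by simpa using h, fun i j hij hi hj => ?_⟩
  simp only [chainSegs, List.tail_cons, List.zip_cons_cons, List.zip_nil_right,
    List.length_singleton] at hi hj
  omega

theorem genuineBends_pair (P Q : Pt) : GenuineBends [P, Q] := fun i h => by
  simp only [List.length_cons, List.length_nil] at h
  omega

namespace PolylineDrawing

variable {V : Type*} {G : SimpleGraph V}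

variable (G) in
/-- The straight-line drawing of `G` with the vertices at the points `pos`. -/
def ofPos (pos : V → Pt) : PolylineDrawing G where
  pos := pos
  bends _ _ := []
  bends_symm _ _ := rfl

variable {pos : V → Pt}

theorem curve_ofPos (u v : V) : (ofPos G pos).curve u v = segment ℝ (pos u) (pos v) :=
  chainSet_pair _ _

theorem points_ofPos : (ofPos G pos).points = range pos := by
  simp [points, ofPos]

theorem isPlanar_ofPos {J : V → V → Prop} (hJ : ∀ {u v}, G.Adj u v → J u v ∨ J v u)
    (hinj : Function.Injective pos)
    (hvertex : ∀ {u v w}, J u v → pos w ∈ segment ℝ (pos u) (pos v) → w = u ∨ w = v)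
    (hcross : ∀ {u v x y}, J u v → J x y → (u, v) ≠ (x, y) →
      segment ℝ (pos u) (pos v) ∩ segment ℝ (pos x) (pos y) ⊆ pos '' ({u, v} ∩ {x, y})) :
    (ofPos G pos).IsPlanar := by
  refine ⟨hinj, fun u v h => ⟨isSimpleChain_pair (hinj.ne h.ne), genuineBends_pair _ _⟩,
    fun u v w h hu hv hw => ?_, fun u v x y h h' hne => ?_⟩
  · rw [curve_ofPos] at hw
    rcases hJ h with h | h
    · exact (hvertex h hw).elim hu hv
    · exact (hvertex h (segment_symm ℝ (pos u) _ ▸ hw)).elim hv hu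
  · simp only [curve_ofPos]
    wlog huv : J u v generalizing u v
    · rw [segment_symm, pair_comm u v]
      exact this v u h.symm (by rwa [Sym2.eq_swap]) ((hJ h).resolve_left huv)
    wlog hxy : J x y generalizing x y
    · rw [segment_symm ℝ (pos x), pair_comm x y]
      exact this y x h'.symm (by rwa [Sym2.eq_swap (a := y)]) ((hJ h').resolve_left hxy)
    exact hcross huv hxy fun heq => hne (congrArg Sym2.mk.uncurry heq)

end PolylineDrawing

namespace OrthDrawing

variable {V : Type*} {G : SimpleGraph V} {D : OrthDrawing G}

variable (D) in
/-- The point at which the edge `uv` is attached to the box of `u`; the default value `0` is only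
taken when `u` and `v` are not adjacent. -/
def attach (u v : V) : Pt := (D.chain u v).headD 0

section VisibilityRepresentation

variable {u v w x y : V} {z : Pt}

theorem chain_eq_attach (hvr : D.IsVR) (h : G.Adj u v) :
    D.chain u v = [D.attach u v, D.attach v u] := by
  obtain ⟨p, q, hpq⟩ := List.length_eq_two.1 (hvr u v h)
  simp [attach, D.chain_symm u v, hpq]

theorem curve_eq_segment (hvr : D.IsVR) (h : G.Adj u v) :
    D.curve u v = segment ℝ (D.attach u v) (D.attach v u) := by
  rw [curve, chain_eq_attach hvr h, chainSet_pair]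

theorem attach_mem_box (hpl : D.IsPlanar) (h : G.Adj u v) :
    D.attach u v ∈ (D.box u).pts := by
  obtain ⟨p, q, l, hchain, hp, -⟩ := hpl.2.2.1 u v h
  simpa [attach, hchain] using hp

theorem attach_fst_eq_or_snd_eq (hpl : D.IsPlanar) (hvr : D.IsVR) (h : G.Adj u v) :
    (D.attach u v).1 = (D.attach v u).1 ∨ (D.attach u v).2 = (D.attach v u).2 :=
  (hpl.2.1 u v h).2.1 (D.attach u v, D.attach v u) (by simp [chain_eq_attach hvr h, chainSegs])

theorem eq_or_eq_of_mem_curve_of_mem_box (hpl : D.IsPlanar) (h : G.Adj u v)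
    (hz : z ∈ D.curve u v) (hzw : z ∈ (D.box w).pts) : w = u ∨ w = v :=
  (hpl.2.2.2.1 u v w h ⟨hz, hzw⟩).imp And.left And.left

theorem eq_attach_of_mem_curve_of_mem_curve (hpl : D.IsPlanar) (hvr : D.IsVR) (h : G.Adj u v)
    (h' : G.Adj x y) (hne : s(u, v) ≠ s(x, y)) (hz : z ∈ D.curve u v) (hz' : z ∈ D.curve x y) :
    z = D.attach u v ∨ z = D.attach v u := by
  simpa [chain_eq_attach hvr h, eq_comm] using (hpl.2.2.2.2 u v x y h h' hne ⟨hz, hz'⟩).1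

end VisibilityRepresentation

section Flat

variable {u v w a b : V} {z : Pt}

theorem mem_box_iff (hflat : D.IsFlat) :
    z ∈ (D.box v).pts ↔ z.1 ∈ Icc (D.box v).x1 (D.box v).x2 ∧ z.2 = (D.box v).y1 := by
  rw [Box.pts, mem_prod, ← hflat v, Icc_self, mem_singleton_iff]

theorem bar_bar (hpl : D.IsPlanar) (hflat : D.IsFlat) (hne : u ≠ v)
    (hy : (D.box u).y1 = (D.box v).y1) :
    (D.box u).x2 < (D.box v).x1 ∨ (D.box v).x2 < (D.box u).x1 := by
  by_contra! hcon
  have hz : (max (D.box u).x1 (D.box v).x1, (D.box u).y1) ∈ (D.box u).pts :=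
    (mem_box_iff hflat).2 ⟨⟨le_max_left _ _, max_le (D.box u).hx hcon.1⟩, rfl⟩
  exact disjoint_left.1 (hpl.1 u v hne) hz
    ((mem_box_iff hflat).2 ⟨⟨le_max_right _ _, max_le hcon.2 (D.box v).hx⟩, hy⟩)

theorem attach_snd (hpl : D.IsPlanar) (hflat : D.IsFlat) (h : G.Adj u v) :
    (D.attach u v).2 = (D.box u).y1 :=
  ((mem_box_iff hflat).1 (attach_mem_box hpl h)).2

theorem attach_fst_mem_Icc (hpl : D.IsPlanar) (hflat : D.IsFlat) (h : G.Adj u v) :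
    (D.attach u v).1 ∈ Icc (D.box u).x1 (D.box u).x2 :=
  ((mem_box_iff hflat).1 (attach_mem_box hpl h)).1

theorem attach_fst_comm (hpl : D.IsPlanar) (hflat : D.IsFlat) (hvr : D.IsVR) (h : G.Adj u v)
    (hy : (D.box u).y1 < (D.box v).y1) : (D.attach v u).1 = (D.attach u v).1 := by
  refine ((attach_fst_eq_or_snd_eq hpl hvr h).resolve_right fun hsnd => hy.ne ?_).symm
  rwa [attach_snd hpl hflat h, attach_snd hpl hflat h.symm] at hsnd

theorem mem_curve_of_y1_lt (hpl : D.IsPlanar) (hflat : D.IsFlat) (hvr : D.IsVR) (h : G.Adj u v)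
    (hy : (D.box u).y1 < (D.box v).y1) {t : ℝ} (ht : t ∈ Icc (D.box u).y1 (D.box v).y1) :
    ((D.attach u v).1, t) ∈ D.curve u v := by
  rw [curve_eq_segment hvr h,
    ← Prod.mk.eta (p := D.attach v u), attach_fst_comm hpl hflat hvr h hy,
    ← Prod.mk.eta (p := D.attach u v), ← Prod.image_mk_segment_right, attach_snd hpl hflat h,
    attach_snd hpl hflat h.symm, segment_eq_Icc hy.le]
  exact mem_image_of_mem _ ht

theorem mem_curve_of_y1_eq (hpl : D.IsPlanar) (hflat : D.IsFlat) (hvr : D.IsVR) (h : G.Adj u v)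
    (hy : (D.box u).y1 = (D.box v).y1) {s : ℝ} (hs : s ∈ Icc (D.box u).x2 (D.box v).x1) :
    (s, (D.box u).y1) ∈ D.curve u v := by
  have hu := (attach_fst_mem_Icc hpl hflat h).2.trans hs.1
  have hv := hs.2.trans (attach_fst_mem_Icc hpl hflat h.symm).1
  rw [curve_eq_segment hvr h, ← Prod.mk.eta (p := D.attach u v),
    ← Prod.mk.eta (p := D.attach v u), attach_snd hpl hflat h, attach_snd hpl hflat h.symm, ← hy,
    ← Prod.image_mk_segment_left, segment_eq_Icc (hu.trans hv)]
  exact mem_image_of_mem _ ⟨hu, hv⟩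

theorem vert_bar (hpl : D.IsPlanar) (hflat : D.IsFlat) (hvr : D.IsVR) (h : G.Adj u v)
    (hu : (D.box u).y1 < (D.box w).y1) (hv : (D.box w).y1 < (D.box v).y1) :
    (D.attach u v).1 < (D.box w).x1 ∨ (D.box w).x2 < (D.attach u v).1 := by
  by_contra! hcon
  have hz := mem_curve_of_y1_lt hpl hflat hvr h (hu.trans hv) ⟨hu.le, hv.le⟩
  obtain rfl | rfl := eq_or_eq_of_mem_curve_of_mem_box hpl h hz ((mem_box_iff hflat).2 ⟨hcon, rfl⟩)
  exacts [hu.false, hv.false]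

theorem vert_vert (hpl : D.IsPlanar) (hflat : D.IsFlat) (hvr : D.IsVR) (h : G.Adj u v)
    (h' : G.Adj a b) (hy : (D.box u).y1 < (D.box v).y1) (hy' : (D.box a).y1 < (D.box b).y1)
    (hcol : (D.attach u v).1 = (D.attach a b).1) (hub : (D.box u).y1 < (D.box b).y1)
    (hav : (D.box a).y1 < (D.box v).y1) : u = a ∧ v = b := by
  by_contra hcon
  have hne : s(u, v) ≠ s(a, b) := by
    rw [Ne, Sym2.eq_iff]
    rintro (heq | ⟨rfl, rfl⟩)
    exacts [hcon heq, hy.not_gt hy']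
  obtain ⟨t, ht, ht'⟩ :
      ∃ t, max (D.box u).y1 (D.box a).y1 < t ∧ t < min (D.box v).y1 (D.box b).y1 :=
    exists_between (max_lt (lt_min hy hub) (lt_min hav hy'))
  rw [max_lt_iff] at ht
  rw [lt_min_iff] at ht'
  have hz := mem_curve_of_y1_lt hpl hflat hvr h hy ⟨ht.1.le, ht'.1.le⟩
  have hz' := mem_curve_of_y1_lt hpl hflat hvr h' hy' ⟨ht.2.le, ht'.2.le⟩
  rw [← hcol] at hz'
  rcases eq_attach_of_mem_curve_of_mem_curve hpl hvr h h' hne hz hz' with heq | heq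
  · exact ht.1.ne' ((congrArg Prod.snd heq).trans (attach_snd hpl hflat h))
  · exact ht'.1.ne ((congrArg Prod.snd heq).trans (attach_snd hpl hflat h.symm))

theorem horiz_bar (hpl : D.IsPlanar) (hflat : D.IsFlat) (hvr : D.IsVR) (h : G.Adj u v)
    (hy : (D.box u).y1 = (D.box v).y1)
    (hwu : w ≠ u) (hwv : w ≠ v) (hw : (D.box w).y1 = (D.box u).y1) :
    (D.box w).x2 < (D.box u).x1 ∨ (D.box v).x2 < (D.box w).x1 := by
  refine (bar_bar hpl hflat hwu hw).imp_right fun hu => ?_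
  refine (bar_bar hpl hflat hwv (hw.trans hy)).resolve_left fun hv => ?_
  have hz := mem_curve_of_y1_eq hpl hflat hvr h hy ⟨hu.le, (D.box w).hx.trans hv.le⟩
  exact (eq_or_eq_of_mem_curve_of_mem_box hpl h hz
    ((mem_box_iff hflat).2 ⟨⟨le_rfl, (D.box w).hx⟩, hw.symm⟩)).elim hwu hwv

theorem horiz_vert (hpl : D.IsPlanar) (hflat : D.IsFlat) (hvr : D.IsVR) (h : G.Adj u v)
    (hy : (D.box u).y1 = (D.box v).y1) (h' : G.Adj a b) (ha : (D.box a).y1 < (D.box u).y1)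
    (hb : (D.box u).y1 < (D.box b).y1) :
    (D.attach a b).1 < (D.box u).x1 ∨ (D.box v).x2 < (D.attach a b).1 := by
  refine (vert_bar hpl hflat hvr h' ha hb).imp_right fun hu => ?_
  refine (vert_bar hpl hflat hvr h' (hy ▸ ha) (hy ▸ hb)).resolve_left fun hv => ?_
  have hz := mem_curve_of_y1_lt hpl hflat hvr h' (ha.trans hb) ⟨ha.le, hb.le⟩
  have hz' := mem_curve_of_y1_eq hpl hflat hvr h hy ⟨hu.le, hv.le⟩
  have hne : s(a, b) ≠ s(u, v) := by
    rw [Ne, Sym2.eq_iff]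
    rintro (⟨rfl, rfl⟩ | ⟨rfl, rfl⟩)
    exacts [ha.false, hb.false]
  rcases eq_attach_of_mem_curve_of_mem_curve hpl hvr h' h hne hz hz' with heq | heq
  · exact ha.ne' ((congrArg Prod.snd heq).trans (attach_snd hpl hflat h'))
  · exact hb.ne ((congrArg Prod.snd heq).trans (attach_snd hpl hflat h'.symm))

theorem snd_image_points (hpl : D.IsPlanar) (hflat : D.IsFlat) (hvr : D.IsVR) :
    Prod.snd '' D.points = range fun v => (D.box v).y1 := by
  apply Subset.antisymm
  · rintro _ ⟨p, hp | hp, rfl⟩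
    · obtain ⟨v, hv⟩ := mem_iUnion.1 hp
      have := hflat v
      exact ⟨v, by rcases hv with rfl | rfl | rfl | rfl <;> simp [this]⟩
    · simp only [mem_iUnion] at hp
      obtain ⟨u, v, h, hp⟩ := hp
      rw [chain_eq_attach hvr h, mem_ofPred_eq, List.mem_pair] at hp
      obtain rfl | rfl := hp
      exacts [⟨u, (attach_snd hpl hflat h).symm⟩, ⟨v, (attach_snd hpl hflat h.symm).symm⟩]
  · rintro _ ⟨v, rfl⟩
    exact ⟨((D.box v).x1, (D.box v).y1), .inl (mem_iUnion.2 ⟨v, .inl rfl⟩), rfl⟩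

end Flat

theorem inHeight_iff_of_snd_image_points_eq {D' : PolylineDrawing G}
    (h : Prod.snd '' D'.points = Prod.snd '' D.points) (n : ℕ) :
    D.InHeight n ↔ D'.InHeight n := by
  refine exists_congr fun y₀ => ?_
  let P (t : ℝ) : Prop := y₀ ≤ t ∧ t ≤ y₀ + n - 1
  exact (forall_mem_image (f := Prod.snd) (p := P)).symm.trans (h ▸ forall_mem_image)

namespace IntCoords

variable {u v : V}

theorem isIntPt_corners (hint : D.IntCoords) (v : V) :
    IsIntPt ((D.box v).x1, (D.box v).y1) ∧ IsIntPt ((D.box v).x2, (D.box v).y1) :=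
  ⟨hint _ (.inl (mem_iUnion.2 ⟨v, by simp⟩)), hint _ (.inl (mem_iUnion.2 ⟨v, by simp⟩))⟩

theorem isIntPt_attach (hint : D.IntCoords) (hvr : D.IsVR) (h : G.Adj u v) :
    IsIntPt (D.attach u v) := by
  refine hint _ (.inr ?_)
  simp only [mem_iUnion]
  exact ⟨u, v, h, by simp [chain_eq_attach hvr h]⟩

theorem floor_y1 (hint : D.IntCoords) (v : V) : (⌊(D.box v).y1⌋ : ℝ) = (D.box v).y1 :=
  (Int.floor_eq_self_iff_mem _).2 ((hint.isIntPt_corners v).1.2.imp fun _ => Eq.symm)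

theorem floor_x1 (hint : D.IntCoords) (v : V) : (⌊(D.box v).x1⌋ : ℝ) = (D.box v).x1 :=
  (Int.floor_eq_self_iff_mem _).2 ((hint.isIntPt_corners v).1.1.imp fun _ => Eq.symm)

theorem floor_x2 (hint : D.IntCoords) (v : V) : (⌊(D.box v).x2⌋ : ℝ) = (D.box v).x2 :=
  (Int.floor_eq_self_iff_mem _).2 ((hint.isIntPt_corners v).2.1.imp fun _ => Eq.symm)

theorem floor_attach_fst (hint : D.IntCoords) (hvr : D.IsVR) (h : G.Adj u v) :
    (⌊(D.attach u v).1⌋ : ℝ) = (D.attach u v).1 :=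
  (Int.floor_eq_self_iff_mem _).2 ((hint.isIntPt_attach hvr h).1.imp fun _ => Eq.symm)

end IntCoords

/-- The bar layout of a planar flat visibility representation with integer coordinates, all of
which are recovered by rounding down. -/
noncomputable def barLayout (hpl : D.IsPlanar) (hflat : D.IsFlat) (hvr : D.IsVR)
    (hint : D.IntCoords) : BarLayout V where
  row v := ⌊(D.box v).y1⌋
  left v := ⌊(D.box v).x1⌋
  right v := ⌊(D.box v).x2⌋
  Vert u v := G.Adj u v ∧ ⌊(D.box u).y1⌋ < ⌊(D.box v).y1⌋
  col u v := ⌊(D.attach u v).1⌋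
  left_le_right v := Int.floor_le_floor (D.box v).hx
  row_lt_row h := h.2
  col_mem_bot h := (attach_fst_mem_Icc hpl hflat h.1).imp Int.floor_le_floor Int.floor_le_floor
  col_mem_top := fun {u v} ⟨h, hlt⟩ => by
    rw [← Int.cast_lt (R := ℝ), hint.floor_y1, hint.floor_y1] at hlt
    rw [← attach_fst_comm hpl hflat hvr h hlt]
    exact (attach_fst_mem_Icc hpl hflat h.symm).imp Int.floor_le_floor Int.floor_le_floor
  bar_bar hne h := by
    simp only [← Int.cast_lt (R := ℝ), ← Int.cast_inj (α := ℝ), hint.floor_x1, hint.floor_x2,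
      hint.floor_y1] at h ⊢
    exact bar_bar hpl hflat hne h
  vert_bar := fun ⟨h, _⟩ hu hv => by
    simp only [← Int.cast_lt (R := ℝ), hint.floor_x1, hint.floor_x2, hint.floor_y1,
      hint.floor_attach_fst hvr h] at hu hv ⊢
    exact vert_bar hpl hflat hvr h hu hv
  vert_vert := fun ⟨h, hy⟩ ⟨h', hy'⟩ hcol huv' hu'v => by
    simp only [← Int.cast_lt (R := ℝ), ← Int.cast_inj (α := ℝ), hint.floor_y1,
      hint.floor_attach_fst hvr h, hint.floor_attach_fst hvr h'] at hy hy' hcol huv' hu'v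
    exact vert_vert hpl hflat hvr h h' hy hy' hcol huv' hu'v

section

variable {u v : V} (hpl : D.IsPlanar) (hflat : D.IsFlat) (hvr : D.IsVR) (hint : D.IntCoords)

theorem horiz_barLayout (h : G.Adj u v) (hy : (D.box u).y1 = (D.box v).y1)
    (hx : (D.box u).x2 < (D.box v).x1) : (barLayout hpl hflat hvr hint).Horiz u v := by
  refine ⟨congrArg Int.floor hy, ?_, ?_⟩
  · rwa [← Int.cast_lt (R := ℝ), barLayout, hint.floor_x1, hint.floor_x2]
  · rintro (w | ⟨a, b⟩) hA hu hv
    · have hrow : ⌊(D.box w).y1⌋ = ⌊(D.box u).y1⌋ := hA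
      rw [← Int.cast_inj (α := ℝ), hint.floor_y1, hint.floor_y1] at hrow
      simp only [BarLayout.lo, BarLayout.hi, barLayout, ← Int.cast_lt (R := ℝ), hint.floor_x1,
        hint.floor_x2]
      exact horiz_bar hpl hflat hvr h hy (by simpa using hu) (by simpa using hv) hrow
    · obtain ⟨⟨hab, -⟩, ha, hb⟩ := hA
      simp only [BarLayout.lo, BarLayout.hi, barLayout, ← Int.cast_lt (R := ℝ), hint.floor_x1,
        hint.floor_x2, hint.floor_y1, hint.floor_attach_fst hvr hab] at ha hb ⊢
      exact horiz_vert hpl hflat hvr h hy hab ha hb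

theorem joined_barLayout (h : G.Adj u v) :
    (barLayout hpl hflat hvr hint).Joined u v ∨ (barLayout hpl hflat hvr hint).Joined v u := by
  have vert {u v : V} (h : G.Adj u v) (hlt : (D.box u).y1 < (D.box v).y1) :
      (barLayout hpl hflat hvr hint).Vert u v :=
    ⟨h, by rwa [← Int.cast_lt (R := ℝ), hint.floor_y1, hint.floor_y1]⟩
  rcases lt_trichotomy (D.box u).y1 (D.box v).y1 with hlt | heq | hlt
  · exact .inl (.inl (vert h hlt))
  · exact (bar_bar hpl hflat h.ne heq).imp (.inr <| horiz_barLayout hpl hflat hvr hint h heq ·)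
      (.inr <| horiz_barLayout hpl hflat hvr hint h.symm heq.symm ·)
  · exact .inr (.inl (vert h.symm hlt))

end

end OrthDrawing

theorem BarLayout.IsOrdered.isPlanar_ofPos {V : Type*} {G : SimpleGraph V} {C : BarLayout V}
    {X : V → ℝ} (hX : C.IsOrdered X) (hG : ∀ {u v}, G.Adj u v → C.Joined u v ∨ C.Joined v u) :
    (PolylineDrawing.ofPos G (C.point X)).IsPlanar :=
  PolylineDrawing.isPlanar_ofPos hG hX.point_injective hX.mem_pair_of_joined
    fun h h' hne _ hz => hX.mem_image_of_joined h h' hne hz.1 hz.2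

/-- Any planar flat visibility representation `D` of a finite simple
graph `G` can be transformed into a planar straight-line drawing `D'` of `G` with the
same y-coordinates (each vertex point gets the y-coordinate of its segment in `D`)
and the same left-to-right order in each row; in particular `D'` has the same height. -/
theorem flatVR_to_straightLine {V : Type} [Fintype V] (G : SimpleGraph V)
    (D : OrthDrawing G) (hpl : D.IsPlanar) (hflat : D.IsFlat) (hvr : D.IsVR)
    (hint : D.IntCoords) :
    ∃ D' : PolylineDrawing G, D'.IsPlanar ∧ D'.IsStraightLine ∧ D'.IntCoords ∧
      (∀ v, (D'.pos v).2 = (D.box v).y1) ∧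
      (∀ v w : V, (D.box v).y1 = (D.box w).y1 → (D.box v).x2 < (D.box w).x1 →
        (D'.pos v).1 < (D'.pos w).1) ∧
      (∀ h : ℕ, D.InHeight h ↔ D'.InHeight h) := by
  let C := OrthDrawing.barLayout hpl hflat hvr hint
  obtain ⟨X, hX⟩ := C.exists_int_isOrdered
  let pos : V → Pt := C.point fun v => X v
  have hpoints : (PolylineDrawing.ofPos G pos).points = range pos := PolylineDrawing.points_ofPos
  refine ⟨.ofPos G pos, hX.isPlanar_ofPos (OrthDrawing.joined_barLayout hpl hflat hvr hint),
    fun _ _ => rfl, ?_, hint.floor_y1, fun v w hy hx => ?_,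
    OrthDrawing.inHeight_iff_of_snd_image_points_eq ?_⟩
  · rw [PolylineDrawing.IntCoords, hpoints, forall_mem_range]
    exact fun v => ⟨⟨X v, rfl⟩, C.row v, rfl⟩
  · rw [← hint.floor_x2, ← hint.floor_x1, Int.cast_lt] at hx
    exact hX.lt_of_right_lt_left (congrArg Int.floor hy) hx
  · rw [hpoints, OrthDrawing.snd_image_points hpl hflat hvr, ← range_comp]
    exact congrArg range (funext hint.floor_y1)
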